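/- Let A ∈ ℝ^{n×n} be a signed real matrix with zero diagonal, let L be its complex Laplacian (so L = D − A with d_i = Σ_j |a_{ij}|), let Δ = max_i d_i, and suppose 0 < κ < 1/Δ. If A is essentially nonnegative and the digraph G(A) has a directed spanning tree, then there exist σ ∈ {−1, +1}^n such that D_σ A D_σ is entrywise nonnegative and η ∈ ℝ^n with η^T L = 0 and ‖η‖₁ = 1 such that for every initial state x(0) ∈ ℝ^n, the iterates x(k) = (I − κL)^k x(0) satisfy lim_{k→∞} x(k) = (η^T x(0)) σ. -/

import Mathlib

open Matrix Filter

/-- The Laplacian `L = D - A` of a signed real matrix, with `d i = ∑ j, |A i j|`. -/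
noncomputable def lapR {n : ℕ} (A : Matrix (Fin n) (Fin n) ℝ) : Matrix (Fin n) (Fin n) ℝ :=
  Matrix.diagonal (fun i => ∑ j, |A i j|) - A

/-- `G(A)` has a directed spanning tree: some root `r` has a directed path
(an edge from `u` to `v` exists iff `A v u ≠ 0`) to every vertex. -/
def hasSpanningTreeR {n : ℕ} (A : Matrix (Fin n) (Fin n) ℝ) : Prop :=
  ∃ r : Fin n, ∀ j, Relation.ReflTransGen (fun u v => A v u ≠ 0) r j

/-- A signed real matrix is essentially nonnegative iff some signature
`σ ∈ {±1}^n` makes `D_σ A D_σ` entrywise nonnegative. -/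
def EssNonnegR {n : ℕ} (A : Matrix (Fin n) (Fin n) ℝ) : Prop :=
  ∃ σ : Fin n → ℝ, (∀ i, σ i = 1 ∨ σ i = -1) ∧
    ∀ i j, 0 ≤ (Matrix.diagonal σ * A * Matrix.diagonal σ) i j

/-- A sequence of vectors eventually confined to arbitrarily small cubes `[m, M]^ι` converges to a
constant vector. -/
lemma exists_tendsto_const_of_eventually_narrow {ι : Type*} [Nonempty ι] (u : ℕ → ι → ℝ)
    (h : ∀ δ > 0, ∃ m M : ℝ, M - m < δ ∧ ∀ᶠ k in atTop, ∀ i, m ≤ u k i ∧ u k i ≤ M) :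
    ∃ c : ℝ, ∀ i, Tendsto (fun k => u k i) atTop (nhds c) := by
  obtain ⟨r⟩ := ‹Nonempty ι›
  have hc : CauchySeq (fun k => u k r) := by
    rw [Metric.cauchySeq_iff]
    intro δ hδ
    obtain ⟨m, M, hmM, hk⟩ := h δ hδ
    obtain ⟨K, hK⟩ := eventually_atTop.1 hk
    refine ⟨K, fun k hk l hl => ?_⟩
    have h1 := hK k hk r
    have h2 := hK l hl r
    rw [Real.dist_eq, abs_lt]
    constructor <;> linarith
  obtain ⟨c, hc⟩ := cauchySeq_tendsto_of_complete hc
  refine ⟨c, fun i => ?_⟩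
  have hdiff : Tendsto (fun k => u k i - u k r) atTop (nhds 0) := by
    rw [Metric.tendsto_nhds]
    intro δ hδ
    obtain ⟨m, M, hmM, hk⟩ := h δ hδ
    filter_upwards [hk] with k hk
    rw [Real.dist_eq, sub_zero, abs_lt]
    constructor <;> linarith [hk i, hk r]
  simpa using hdiff.add hc

section RowStochastic

variable {ι : Type*} [Fintype ι] [DecidableEq ι] {B : Matrix ι ι ℝ}

/-- If every entry of column `r` of a row-stochastic matrix is at least `ε`, the matrix maps
vectors with entries in `[m, M]` to vectors with entries in an interval determined by `x r`. -/
lemma mulVec_mem_Icc_of_le_col (hB : B ∈ rowStochastic ℝ ι) {r : ι} {ε : ℝ}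
    (hε : ∀ i, ε ≤ B i r) {x : ι → ℝ} {m M : ℝ} (hx : ∀ i, m ≤ x i ∧ x i ≤ M) (i : ι) :
    ε * x r + (1 - ε) * m ≤ (B *ᵥ x) i ∧ (B *ᵥ x) i ≤ ε * x r + (1 - ε) * M := by
  have hnn : ∀ j, 0 ≤ B i j := fun j => nonneg_of_mem_rowStochastic hB
  have hsum : ∑ j, B i j = 1 := sum_row_of_mem_rowStochastic hB i
  have key : ∀ y : ι → ℝ, (∀ j, 0 ≤ y j) → ε * y r ≤ ∑ j, B i j * y j := fun y hy =>
    (mul_le_mul_of_nonneg_right (hε i) (hy r)).trans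
      (Finset.single_le_sum (f := fun j => B i j * y j)
        (fun j _ => mul_nonneg (hnn j) (hy j)) (Finset.mem_univ r))
  have hlow := key (fun j => x j - m) fun j => sub_nonneg.2 (hx j).1
  have hupp := key (fun j => M - x j) fun j => sub_nonneg.2 (hx j).2
  simp only [mul_sub, Finset.sum_sub_distrib, ← Finset.sum_mul, hsum] at hlow hupp
  simp only [mulVec, dotProduct]
  constructor <;> linarith

/-- A row-stochastic matrix maps `[m, M]^ι` into itself. -/
lemma mulVec_mem_Icc (hB : B ∈ rowStochastic ℝ ι) {x : ι → ℝ} {m M : ℝ}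
    (hx : ∀ i, m ≤ x i ∧ x i ≤ M) (i : ι) : m ≤ (B *ᵥ x) i ∧ (B *ᵥ x) i ≤ M := by
  simpa using mulVec_mem_Icc_of_le_col hB (r := i) (ε := 0)
    (fun _ => nonneg_of_mem_rowStochastic hB) hx i

/-- If some power of a row-stochastic matrix has a positive column, all its orbits converge to
constant vectors. -/
lemma exists_tendsto_pow_mulVec (hB : B ∈ rowStochastic ℝ ι) {r : ι} {N : ℕ}
    (hN : ∀ i, 0 < (B ^ N) i r) (x : ι → ℝ) :
    ∃ c : ℝ, ∀ i, Tendsto (fun k => (B ^ k *ᵥ x) i) atTop (nhds c) := by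
  have : Nonempty ι := ⟨r⟩
  have hpow : ∀ k, B ^ k ∈ rowStochastic ℝ ι := fun k => pow_mem hB k
  obtain ⟨i₀, hi₀⟩ := Finite.exists_min fun i => (B ^ N) i r
  set ε := (B ^ N) i₀ r
  have hε1 : ε ≤ 1 := le_one_of_mem_rowStochastic (hpow N)
  obtain ⟨a, ha⟩ := Finite.exists_min x
  obtain ⟨b, hb⟩ := Finite.exists_max x
  have hiter : ∀ q : ℕ, ∃ m M : ℝ, M - m = (1 - ε) ^ q * (x b - x a) ∧
      ∀ i, m ≤ (B ^ (N * q) *ᵥ x) i ∧ (B ^ (N * q) *ᵥ x) i ≤ M := by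
    intro q
    induction q with
    | zero => exact ⟨x a, x b, by simp, fun i => by simpa using ⟨ha i, hb i⟩⟩
    | succ q ih =>
      obtain ⟨m, M, hmM, hq⟩ := ih
      have hcontr := mulVec_mem_Icc_of_le_col (hpow N) hi₀ hq
      rw [mulVec_mulVec, ← pow_add, add_comm N, ← mul_add_one] at hcontr
      refine ⟨_, _, ?_, hcontr⟩
      rw [pow_succ]
      linear_combination (1 - ε) * hmM
  refine exists_tendsto_const_of_eventually_narrow _ fun δ hδ => ?_
  have hlim : Tendsto (fun q : ℕ => (1 - ε) ^ q * (x b - x a)) atTop (nhds 0) := by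
    simpa using (tendsto_pow_atTop_nhds_zero_of_lt_one (sub_nonneg.2 hε1)
      (sub_lt_self 1 (hN i₀))).mul_const (x b - x a)
  obtain ⟨q, hq⟩ := (hlim.eventually_lt_const hδ).exists
  obtain ⟨m, M, hmM, hbd⟩ := hiter q
  refine ⟨m, M, hmM ▸ hq, ?_⟩
  filter_upwards [eventually_ge_atTop (N * q)] with k hk i
  obtain ⟨l, rfl⟩ := Nat.exists_eq_add_of_le' hk
  rw [pow_add, ← mulVec_mulVec]
  exact mulVec_mem_Icc (hpow l) hbd i

/-- A row-stochastic matrix with positive diagonal whose digraph is rooted at `r` has a power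
whose column `r` is positive. -/
lemma exists_pow_col_pos (hB : B ∈ rowStochastic ℝ ι) (hdiag : ∀ i, 0 < B i i) {r : ι}
    (hr : ∀ j, Relation.ReflTransGen (fun u v => 0 < B v u) r j) :
    ∃ N : ℕ, ∀ i, 0 < (B ^ N) i r := by
  have hstep : ∀ {u v : ι} {k : ℕ}, 0 < B v u → 0 < (B ^ k) u r → 0 < (B ^ (k + 1)) v r := by
    intro u v k h1 h2
    rw [pow_succ', mul_apply]
    exact Finset.sum_pos' (fun j _ => mul_nonneg (nonneg_of_mem_rowStochastic hB)
      (nonneg_of_mem_rowStochastic (pow_mem hB k))) ⟨u, Finset.mem_univ u, mul_pos h1 h2⟩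
  have hev : ∀ j, ∃ K : ℕ, ∀ k ≥ K, 0 < (B ^ k) j r := by
    intro j
    suffices h : ∃ K : ℕ, 0 < (B ^ K) j r by
      obtain ⟨K, hK⟩ := h
      exact ⟨K, fun k hk => Nat.le_induction hK (fun _ _ ih => hstep (hdiag j) ih) k hk⟩
    induction hr j with
    | refl => exact ⟨0, by simp⟩
    | tail _ hbc ih =>
      obtain ⟨K, hK⟩ := ih
      exact ⟨K + 1, hstep hbc hK⟩
  exact (eventually_all.2 fun j => eventually_atTop.2 (hev j)).exists

/-- The powers of a row-stochastic matrix with positive diagonal and rooted digraph converge to a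
matrix all of whose rows equal a stationary probability vector. -/
lemma exists_stationary_tendsto_pow (hB : B ∈ rowStochastic ℝ ι) (hdiag : ∀ i, 0 < B i i) {r : ι}
    (hr : ∀ j, Relation.ReflTransGen (fun u v => 0 < B v u) r j) :
    ∃ p : ι → ℝ, (∀ i, 0 ≤ p i) ∧ ∑ i, p i = 1 ∧ p ᵥ* B = p ∧
      ∀ i j, Tendsto (fun k => (B ^ k) i j) atTop (nhds (p j)) := by
  obtain ⟨N, hN⟩ := exists_pow_col_pos hB hdiag hr
  choose p hp using fun j => exists_tendsto_pow_mulVec hB hN (Pi.single j 1)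
  simp only [mulVec_single_one, col_apply] at hp
  refine ⟨p, fun j => ?_, ?_, ?_, fun i j => hp j i⟩
  · exact ge_of_tendsto' (hp j r) fun k => nonneg_of_mem_rowStochastic (pow_mem hB k)
  · refine tendsto_nhds_unique (tendsto_finsetSum _ fun j _ => hp j r) ?_
    simp only [sum_row_of_mem_rowStochastic (pow_mem hB _), tendsto_const_nhds_iff]
  · ext j
    refine tendsto_nhds_unique (tendsto_finsetSum _ fun l _ => (hp l r).mul_const (B l j)) ?_
    simpa only [← mul_apply, ← pow_succ] using (tendsto_add_atTop_iff_nat 1).2 (hp j r)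

end RowStochastic

/-- For a signature `σ`, conjugation by `diagonal σ` commutes with powers. -/
lemma diagonal_mul_mul_diagonal_pow {ι : Type*} [Fintype ι] [DecidableEq ι] {σ : ι → ℝ}
    (hσ : ∀ i, σ i * σ i = 1) (P : Matrix ι ι ℝ) (k : ℕ) :
    (diagonal σ * P * diagonal σ) ^ k = diagonal σ * P ^ k * diagonal σ := by
  have hD : diagonal σ * diagonal σ = 1 := by
    rw [diagonal_mul_diagonal, ← diagonal_one]
    exact congrArg diagonal (funext hσ)
  induction k with
  | zero => simp [hD]
  | succ k ih =>
    rw [pow_succ, ih, pow_succ]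
    simp only [Matrix.mul_assoc]
    rw [← Matrix.mul_assoc (diagonal σ) (diagonal σ), hD, Matrix.one_mul]

theorem stmt17 {n : ℕ} (A : Matrix (Fin n) (Fin n) ℝ) (hdiag : ∀ i, A i i = 0)
    (κ : ℝ) (hκ1 : 0 < κ) (hκ2 : κ < (⨆ i, ∑ j, |A i j|)⁻¹)
    (hess : EssNonnegR A) (htree : hasSpanningTreeR A) :
    ∃ σ : Fin n → ℝ, (∀ i, σ i = 1 ∨ σ i = -1) ∧
      (∀ i j, 0 ≤ (Matrix.diagonal σ * A * Matrix.diagonal σ) i j) ∧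
      ∃ η : Fin n → ℝ, η ᵥ* lapR A = 0 ∧ (∑ i, |η i|) = 1 ∧
        ∀ x0 : Fin n → ℝ,
          Tendsto (fun k : ℕ => ((1 : Matrix (Fin n) (Fin n) ℝ) - κ • lapR A) ^ k *ᵥ x0)
            atTop (nhds ((η ⬝ᵥ x0) • σ)) := by
  obtain ⟨σ, hσ, hnn⟩ := hess
  refine ⟨σ, hσ, hnn, ?_⟩
  obtain ⟨r, hr⟩ := htree
  have hσσ : ∀ i, σ i * σ i = 1 := fun i => by rcases hσ i with h | h <;> simp [h]
  have hσabs : ∀ i, |σ i| = 1 := fun i => by rcases hσ i with h | h <;> simp [h]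
  simp only [mul_diagonal, diagonal_mul] at hnn
  have habs : ∀ i j, σ i * A i j * σ j = |A i j| := fun i j => by
    rw [← abs_of_nonneg (hnn i j), abs_mul, abs_mul, hσabs, hσabs, one_mul, mul_one]
  have hdeg : ∀ i, κ * ∑ j, |A i j| < 1 := fun i => by
    have hpos : 0 < ⨆ i, ∑ j, |A i j| := inv_pos.1 (hκ1.trans hκ2)
    have hle : ∑ j, |A i j| ≤ ⨆ i, ∑ j, |A i j| :=
      le_ciSup (f := fun i => ∑ j, |A i j|) (Set.finite_range _).bddAbove i
    calc κ * ∑ j, |A i j| ≤ κ * ⨆ i, ∑ j, |A i j| := by gcongr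
      _ < 1 := (lt_inv_mul_iff₀' hpos).1 (by simpa using hκ2)
  set P : Matrix (Fin n) (Fin n) ℝ := 1 - κ • lapR A with hP
  set B := diagonal σ * P * diagonal σ with hB
  have hBapply : ∀ i j, B i j = (if i = j then 1 - κ * ∑ l, |A i l| else 0) + κ * |A i j| := by
    intro i j
    rw [← habs i j, hB, mul_diagonal, diagonal_mul, hP]
    simp only [lapR, Matrix.sub_apply, Matrix.smul_apply, one_apply, diagonal_apply, smul_eq_mul]
    split_ifs with hij
    · subst hij
      linear_combination (1 - κ * ∑ l, |A i l|) * hσσ i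
    · ring
  have hBdiag : ∀ i, 0 < B i i := fun i => by
    rw [hBapply, hdiag]
    simpa using hdeg i
  have hBst : B ∈ rowStochastic ℝ (Fin n) := by
    rw [mem_rowStochastic_iff_sum]
    refine ⟨fun i j => ?_, fun i => ?_⟩
    · rw [hBapply]
      have := hdeg i
      split_ifs <;> [refine add_nonneg (by linarith) ?_; rw [zero_add]] <;> positivity
    · simp only [hBapply, Finset.sum_add_distrib, Finset.sum_ite_eq, Finset.mem_univ, if_true,
        ← Finset.mul_sum]
      ring
  have hBr : ∀ j, Relation.ReflTransGen (fun u v => 0 < B v u) r j := fun j => by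
    refine Relation.ReflTransGen.mono (fun u v huv => ?_) _ _ (hr j)
    have hvu : v ≠ u := by
      rintro rfl
      exact huv (hdiag v)
    rw [hBapply, if_neg hvu, zero_add]
    exact mul_pos hκ1 (abs_pos.2 huv)
  obtain ⟨p, hp0, hp1, hpB, hlim⟩ := exists_stationary_tendsto_pow hBst hBdiag hBr
  have hpow : ∀ k i j, (P ^ k) i j = σ i * (B ^ k) i j * σ j := fun k i j => by
    rw [hB, diagonal_mul_mul_diagonal_pow hσσ, mul_diagonal, diagonal_mul]
    linear_combination (-(P ^ k) i j) * hσσ i - (P ^ k) i j * σ i * σ i * hσσ j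
  refine ⟨fun i => p i * σ i, ?_, ?_, fun x0 => ?_⟩
  · have hfix : (fun i => p i * σ i) ᵥ* P = fun i => p i * σ i := by
      ext j
      rw [← congrFun hpB j]
      simp only [vecMul, dotProduct, Finset.sum_mul]
      refine Finset.sum_congr rfl fun i _ => ?_
      have h := hpow 1 i j
      rw [pow_one, pow_one] at h
      rw [h]
      linear_combination p i * B i j * σ j * hσσ i
    rw [hP, vecMul_sub, vecMul_one, sub_eq_self, vecMul_smul] at hfix
    exact (smul_eq_zero.1 hfix).resolve_left hκ1.ne'
  · simpa [abs_mul, hσabs, abs_of_nonneg (hp0 _)] using hp1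
  · rw [tendsto_pi_nhds]
    intro i
    have h : Tendsto (fun k => ∑ j, σ i * (B ^ k) i j * σ j * x0 j) atTop
        (nhds (∑ j, σ i * p j * σ j * x0 j)) :=
      tendsto_finsetSum _ fun j _ => (((hlim i j).const_mul _).mul_const _).mul_const _
    simp only [mulVec, dotProduct, hpow, Pi.smul_apply, smul_eq_mul, Finset.sum_mul]
    convert h using 3
    ring
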